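/- The stabilizers S₃,…,S₆ can correct simultaneous bit errors on qutrits 0 and 6: for any a, b ∈ {1,2} and any logical codeword |ψ⟩ ∈ {|0_L⟩,|1_L⟩,|2_L⟩}, the doubly corrupted state X_a^(0) X_b^(6)|ψ⟩ is an eigenvector of each of S₃, S₄, S₅, S₆, with eigenvalue ≠ 1 for S₃ and for S₄, and eigenvalue 1 for S₅ and for S₆; moreover, no single bit error X_c^(j) (c ∈ {1,2}, j ∈ Fin 7) produces a syndrome in which exactly S₃ and S₄ have eigenvalue ≠ 1. -/

import Mathlib

open Complex Matrix

noncomputable section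

/-- ω = exp(2πi/3), a primitive cube root of unity. -/
def ω : ℂ := Complex.exp (2 * (Real.pi : ℂ) * Complex.I / 3)

/-- The ternary cyclic shift matrix: X₁ e_j = e_{(j+1) mod 3}. -/
def X1 : Matrix (Fin 3) (Fin 3) ℂ := Matrix.of fun i j => if i = j + 1 then (1 : ℂ) else 0

/-- The ternary phase matrix Z₁ = diag(1, ω, ω²). -/
def Z1 : Matrix (Fin 3) (Fin 3) ℂ := Matrix.diagonal ![1, ω, ω ^ 2]

/-- X₂ = X₁·X₁. -/
def X2 : Matrix (Fin 3) (Fin 3) ℂ := X1 * X1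

/-- Z₂ = Z₁·Z₁. -/
def Z2 : Matrix (Fin 3) (Fin 3) ℂ := Z1 * Z1

/-- The 7-qutrit state space. -/
abbrev V : Type := (Fin 7 → Fin 3) → ℂ

/-- Standard basis vector of the 7-qutrit state space indexed by a ternary string. -/
def e (s : Fin 7 → Fin 3) : V := fun t => if t = s then 1 else 0

/-- Action on the 7-qutrit space of a tensor product M₀ ⊗ M₁ ⊗ … ⊗ M₆ of 3×3 matrices. -/
def act (M : Fin 7 → Matrix (Fin 3) (Fin 3) ℂ) (v : V) : V :=
  fun s => ∑ t : Fin 7 → Fin 3, (∏ j : Fin 7, M j (s j) (t j)) * v t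

/-- `applyAt M j` applies the single-qutrit operator `M` at position `j` (identity elsewhere). -/
def applyAt (M : Matrix (Fin 3) (Fin 3) ℂ) (j : Fin 7) : V → V :=
  act (fun k => if k = j then M else 1)

/-- The unnormalized logical codeword |0_L⟩. -/
def c0 : V :=
  e ![0,0,0,0,0,0,0] + e ![1,0,2,0,1,0,2] + e ![2,0,1,0,2,0,1]
    + e ![0,1,0,2,0,1,0] + e ![1,1,2,2,1,1,2] + e ![2,1,1,2,2,1,1]
    + e ![0,2,0,1,0,2,0] + e ![1,2,2,1,1,2,2] + e ![2,2,1,1,2,2,1]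

/-- The unnormalized logical codeword |1_L⟩. -/
def c1 : V :=
  e ![1,1,1,1,1,1,1] + e ![2,1,0,1,2,1,0] + e ![0,1,2,1,0,1,2]
    + e ![1,2,1,0,1,2,1] + e ![2,2,0,0,2,2,0] + e ![0,2,2,0,0,2,2]
    + e ![1,0,1,2,1,0,1] + e ![2,0,0,2,2,0,0] + e ![0,0,2,2,0,0,2]

/-- The unnormalized logical codeword |2_L⟩. -/
def c2 : V :=
  e ![2,2,2,2,2,2,2] + e ![0,2,1,2,0,2,1] + e ![1,2,0,2,1,2,0]
    + e ![2,0,2,1,2,0,2] + e ![0,0,1,1,0,0,1] + e ![1,0,0,1,1,0,0]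
    + e ![2,1,2,0,2,1,2] + e ![0,1,1,0,0,1,1] + e ![1,1,0,0,1,1,0]

/-- The three logical codewords. -/
def cw : Fin 3 → V := ![c0, c1, c2]

/-- Phase-error stabilizer S₁ = X₁⊗I⊗X₂⊗I⊗X₁⊗I⊗X₂. -/
def S1 : V → V := act ![X1, 1, X2, 1, X1, 1, X2]

/-- Phase-error stabilizer S₂ = I⊗X₁⊗I⊗X₂⊗I⊗X₁⊗I. -/
def S2 : V → V := act ![1, X1, 1, X2, 1, X1, 1]

/-- Bit-error stabilizer S₃ = Z₁⊗Z₂⊗Z₁⊗Z₂⊗I⊗I⊗I. -/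
def S3 : V → V := act ![Z1, Z2, Z1, Z2, 1, 1, 1]

/-- Bit-error stabilizer S₄ = I⊗I⊗I⊗Z₁⊗Z₂⊗Z₁⊗Z₂. -/
def S4 : V → V := act ![1, 1, 1, Z1, Z2, Z1, Z2]

/-- Bit-error stabilizer S₅ = I⊗Z₁⊗Z₂⊗Z₁⊗Z₂⊗I⊗I. -/
def S5 : V → V := act ![1, Z1, Z2, Z1, Z2, 1, 1]

/-- Bit-error stabilizer S₆ = I⊗I⊗Z₁⊗Z₂⊗Z₁⊗Z₂⊗I. -/
def S6 : V → V := act ![1, 1, Z1, Z2, Z1, Z2, 1]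

/-- XP 0 = X₁, XP 1 = X₂ : the two ternary bit-error operators indexed by {1,2}. -/
def XP : Fin 2 → Matrix (Fin 3) (Fin 3) ℂ := ![X1, X2]

/-!
Write `Z^z` and `X^x` (`z x : Fin 7 → Fin 3`) for the phase and shift strings on seven qutrits. They
obey the Weyl relation `Z^z X^x = χ(z ⬝ᵥ x) X^x Z^z` with `χ(t) = ω ^ t`. The stabilizers S₃,…,S₆
are `Z^h` for the rows `h` of a parity-check matrix `H`, and every ternary string in a codeword lies
in `ker H`, so `X^x|ψ⟩` is a common eigenvector whose eigenvalues are read off the syndrome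
`H *ᵥ x`. Errors `x` and `y` on qutrits 0 and 6 have syndrome `(x, -y, 0, 0)`. A single error has a
multiple of a column of `H`, and the only column that is nonzero in both of the first two rows, that
of qutrit 3, is also nonzero in the third.
-/

section

open scoped Fin.CommRing

lemma isPrimitiveRoot_ω : IsPrimitiveRoot ω 3 := by
  simpa [ω] using Complex.isPrimitiveRoot_exp 3 three_ne_zero

/-- The additive character `x ↦ ω ^ x` of `ℤ/3`, whose values are the eigenvalues of the
phase operators. -/
def omegaChar : AddChar (Fin 3) ℂ where
  toFun x := ω ^ (x : ℕ)
  map_zero_eq_one' := pow_zero ω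
  map_add_eq_mul' x y := by
    rw [Fin.val_add, ← pow_add, ← pow_eq_pow_mod _ isPrimitiveRoot_ω.pow_eq_one]

lemma omegaChar_apply (x : Fin 3) : omegaChar x = ω ^ (x : ℕ) := rfl

lemma omegaChar_eq_one_iff {x : Fin 3} : omegaChar x = 1 ↔ x = 0 := by
  rw [omegaChar_apply, isPrimitiveRoot_ω.pow_eq_one_iff_dvd, ← Fin.natCast_eq_zero,
    Fin.cast_val_eq_self]

lemma omegaChar_sum {ι : Type*} (s : Finset ι) (f : ι → Fin 3) :
    omegaChar (∑ j ∈ s, f j) = ∏ j ∈ s, omegaChar (f j) :=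
  map_prod omegaChar.toMonoidHom (fun j => Multiplicative.ofAdd (f j)) s

/-- The matrix `Z^z` of a single qutrit. -/
def phaseMatrix (z : Fin 3) : Matrix (Fin 3) (Fin 3) ℂ := diagonal fun i => omegaChar (z * i)

/-- The matrix `X^x` of a single qutrit, sending `e_k` to `e_{k+x}`. -/
def shiftMatrix (x : Fin 3) : Matrix (Fin 3) (Fin 3) ℂ := of fun i k => if k = i - x then 1 else 0

lemma phaseMatrix_zero : phaseMatrix 0 = 1 := by
  simp [phaseMatrix]

lemma phaseMatrix_one : phaseMatrix 1 = Z1 := by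
  ext i k
  fin_cases i <;> simp [phaseMatrix, Z1, omegaChar_apply, diagonal_apply]

lemma phaseMatrix_add (z w : Fin 3) : phaseMatrix (z + w) = phaseMatrix z * phaseMatrix w := by
  simp only [phaseMatrix, diagonal_mul_diagonal, add_mul, AddChar.map_add_eq_mul]

lemma phaseMatrix_two : phaseMatrix 2 = Z2 := by
  rw [Z2, ← phaseMatrix_one, ← phaseMatrix_add, one_add_one_eq_two]

lemma shiftMatrix_zero : shiftMatrix 0 = 1 := by
  ext i k
  simp [shiftMatrix, one_apply, eq_comm]

lemma shiftMatrix_one : shiftMatrix 1 = X1 := by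
  ext i k
  simp [shiftMatrix, X1, eq_sub_iff_add_eq, eq_comm]

lemma shiftMatrix_add (x y : Fin 3) : shiftMatrix (x + y) = shiftMatrix x * shiftMatrix y := by
  ext i k
  simp only [shiftMatrix, mul_apply, of_apply, ite_mul, one_mul, zero_mul, Finset.sum_ite_eq',
    Finset.mem_univ, if_true, sub_sub]

lemma shiftMatrix_succ (c : Fin 2) : shiftMatrix c.succ = XP c := by
  fin_cases c
  · exact shiftMatrix_one
  · change shiftMatrix (1 + 1) = X1 * X1
    rw [shiftMatrix_add, shiftMatrix_one]

/-- The phase string `Z^z = Z^{z₀} ⊗ ⋯ ⊗ Z^{z₆}`, in its diagonal form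
`e_s ↦ ω ^ (z ⬝ᵥ s) e_s`. -/
def phaseOp (z : Fin 7 → Fin 3) : V →ₗ[ℂ] V := LinearMap.mulLeft ℂ fun s => omegaChar (z ⬝ᵥ s)

/-- The shift string `X^x = X^{x₀} ⊗ ⋯ ⊗ X^{x₆}`, modelling a bit error. On amplitudes the action
`e_s ↦ e_{s+x}` becomes translation by `-x`. -/
def shiftOp (x : Fin 7 → Fin 3) : V →ₗ[ℂ] V := LinearMap.funLeft ℂ ℂ (· - x)

lemma phaseOp_apply (z : Fin 7 → Fin 3) (v : V) (s : Fin 7 → Fin 3) :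
    phaseOp z v s = omegaChar (z ⬝ᵥ s) * v s := rfl

lemma shiftOp_apply (x : Fin 7 → Fin 3) (v : V) (s : Fin 7 → Fin 3) :
    shiftOp x v s = v (s - x) := rfl

lemma act_apply_of_monomial {M : Fin 7 → Matrix (Fin 3) (Fin 3) ℂ} {f : Fin 7 → Fin 3 → Fin 3}
    {g : Fin 7 → Fin 3 → ℂ} (hM : ∀ j i k, M j i k = if k = f j i then g j i else 0)
    (v : V) (s : Fin 7 → Fin 3) :
    act M v s = (∏ j, g j (s j)) * v fun j => f j (s j) := by
  simp only [act, hM, Fintype.prod_ite_zero, ite_mul, zero_mul, ← funext_iff, Finset.sum_ite_eq',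
    Finset.mem_univ, if_true]

lemma act_phaseMatrix (z : Fin 7 → Fin 3) : act (fun j => phaseMatrix (z j)) = phaseOp z := by
  ext v s
  rw [act_apply_of_monomial (f := fun _ i => i) (g := fun j i => omegaChar (z j * i)),
    phaseOp_apply, dotProduct, omegaChar_sum]
  simp [phaseMatrix, diagonal_apply, eq_comm]

lemma act_shiftMatrix (x : Fin 7 → Fin 3) : act (fun j => shiftMatrix (x j)) = shiftOp x := by
  ext v s
  rw [act_apply_of_monomial (M := fun j => shiftMatrix (x j)) (f := fun j i => i - x j)
    (g := fun _ _ => 1) fun _ _ _ => rfl, Finset.prod_const_one, one_mul]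
  rfl

lemma applyAt_XP (c : Fin 2) (j : Fin 7) : applyAt (XP c) j = shiftOp (Pi.single j c.succ) := by
  rw [applyAt, ← act_shiftMatrix]
  congr 1 with k
  split_ifs with h
  · rw [h, Pi.single_eq_same, shiftMatrix_succ]
  · rw [Pi.single_eq_of_ne h, shiftMatrix_zero]

lemma shiftOp_shiftOp (x y : Fin 7 → Fin 3) (v : V) :
    shiftOp x (shiftOp y v) = shiftOp (x + y) v := by
  ext s
  simp only [shiftOp_apply, sub_sub]

lemma shiftOp_injective (x : Fin 7 → Fin 3) : Function.Injective (shiftOp x) :=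
  LinearMap.funLeft_injective_of_surjective ℂ ℂ _ (Equiv.subRight x).surjective

lemma phaseOp_shiftOp (z x : Fin 7 → Fin 3) (v : V) :
    phaseOp z (shiftOp x v) = omegaChar (z ⬝ᵥ x) • shiftOp x (phaseOp z v) := by
  ext s
  simp only [phaseOp_apply, shiftOp_apply, Pi.smul_apply, smul_eq_mul, ← mul_assoc,
    ← AddChar.map_add_eq_mul, ← dotProduct_add, add_sub_cancel]

lemma phaseOp_e (z s : Fin 7 → Fin 3) : phaseOp z (e s) = omegaChar (z ⬝ᵥ s) • e s := by
  ext t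
  by_cases h : t = s <;> simp [phaseOp_apply, e, h]

/-- The bit-error stabilizers S₃, S₄, S₅, S₆, indexed from `0`. -/
def stabilizer : Fin 4 → V → V := ![S3, S4, S5, S6]

/-- The parity-check matrix of the bit-error stabilizers: row `k` lists the exponents of `Z₁` in
`stabilizer k`. -/
def parityCheck : Matrix (Fin 4) (Fin 7) (Fin 3) :=
  !![1, 2, 1, 2, 0, 0, 0;
     0, 0, 0, 1, 2, 1, 2;
     0, 1, 2, 1, 2, 0, 0;
     0, 0, 1, 2, 1, 2, 0]

lemma stabilizer_eq_phaseOp (k : Fin 4) : stabilizer k = phaseOp (parityCheck k) := by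
  rw [← act_phaseMatrix]
  fin_cases k <;> refine congrArg act (funext fun j => ?_) <;> fin_cases j <;>
    first
      | exact phaseMatrix_zero.symm
      | exact phaseMatrix_one.symm
      | exact phaseMatrix_two.symm

/-- The ternary strings of the codewords: `|i_L⟩` is supported on the coset
`i • 1111111 + ⟨1020102, 0102010⟩`, with `a` and `b` the coordinates in the span. -/
def codeString (i a b : Fin 3) : Fin 7 → Fin 3 :=
  ![i + a, i + b, i + 2 * a, i + 2 * b, i + a, i + b, i + 2 * a]

lemma cw_eq_sum (i : Fin 3) : cw i = ∑ b, ∑ a, e (codeString i a b) := by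
  simp only [Fin.sum_univ_three, ← add_assoc]
  fin_cases i <;> rfl

lemma parityCheck_mulVec_codeString (i a b : Fin 3) : parityCheck *ᵥ codeString i a b = 0 := by
  decide +revert

lemma const_eq_codeString_iff {i a b : Fin 3} :
    (fun _ => i) = codeString i a b ↔ a = 0 ∧ b = 0 := by
  decide +revert

lemma cw_ne_zero (i : Fin 3) : cw i ≠ 0 := by
  have hone : cw i (fun _ => i) = 1 := by
    simp [cw_eq_sum, e, const_eq_codeString_iff, ite_and]
  intro h
  simp [h] at hone

lemma phaseOp_parityCheck_cw (k : Fin 4) (i : Fin 3) : phaseOp (parityCheck k) (cw i) = cw i := by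
  have hdot (a b : Fin 3) : parityCheck k ⬝ᵥ codeString i a b = 0 :=
    congrFun (parityCheck_mulVec_codeString i a b) k
  simp only [cw_eq_sum, map_sum, phaseOp_e, hdot, AddChar.map_zero_eq_one, one_smul]

lemma stabilizer_shiftOp_cw (k : Fin 4) (x : Fin 7 → Fin 3) (i : Fin 3) :
    stabilizer k (shiftOp x (cw i)) = omegaChar ((parityCheck *ᵥ x) k) • shiftOp x (cw i) := by
  rw [stabilizer_eq_phaseOp, phaseOp_shiftOp, phaseOp_parityCheck_cw]
  rfl

lemma eigenvalue_eq_omegaChar_syndrome {k : Fin 4} {x : Fin 7 → Fin 3} {i : Fin 3} {l : ℂ}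
    (h : stabilizer k (shiftOp x (cw i)) = l • shiftOp x (cw i)) :
    l = omegaChar ((parityCheck *ᵥ x) k) := by
  have hne : shiftOp x (cw i) ≠ 0 := (map_ne_zero_iff _ (shiftOp_injective x)).mpr (cw_ne_zero i)
  exact smul_left_injective ℂ hne (h.symm.trans (stabilizer_shiftOp_cw k x i))

lemma syndrome_single_zero_add_single_six (x y : Fin 3) :
    parityCheck *ᵥ (Pi.single 0 x + Pi.single 6 y) = ![x, -y, 0, 0] := by
  decide +revert

lemma syndrome_single_apply_two_ne_zero {x : Fin 3} {j : Fin 7}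
    (h₀ : (parityCheck *ᵥ Pi.single j x) 0 ≠ 0) (h₁ : (parityCheck *ᵥ Pi.single j x) 1 ≠ 0) :
    (parityCheck *ᵥ Pi.single j x) 2 ≠ 0 := by
  decide +revert

lemma stabilizer_two_single_error_ne {x i : Fin 3} {j : Fin 7} {l₀ l₁ : ℂ}
    (hl₀ : l₀ ≠ 1) (hl₁ : l₁ ≠ 1)
    (h₀ : stabilizer 0 (shiftOp (Pi.single j x) (cw i)) = l₀ • shiftOp (Pi.single j x) (cw i))
    (h₁ : stabilizer 1 (shiftOp (Pi.single j x) (cw i)) = l₁ • shiftOp (Pi.single j x) (cw i)) :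
    stabilizer 2 (shiftOp (Pi.single j x) (cw i)) ≠ shiftOp (Pi.single j x) (cw i) := by
  intro h₂
  obtain rfl := eigenvalue_eq_omegaChar_syndrome h₀
  obtain rfl := eigenvalue_eq_omegaChar_syndrome h₁
  have hone := eigenvalue_eq_omegaChar_syndrome (h₂.trans (one_smul ℂ _).symm)
  exact syndrome_single_apply_two_ne_zero (omegaChar_eq_one_iff.not.mp hl₀)
    (omegaChar_eq_one_iff.not.mp hl₁) (omegaChar_eq_one_iff.mp hone.symm)

end

/-- The stabilizers S₃,…,S₆ correct simultaneous bit errors on qutrits 0 and 6: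
X_a^(0) X_b^(6)|ψ⟩ is an eigenvector of each of S₃,…,S₆ with eigenvalue ≠ 1 for S₃ and
S₄ and eigenvalue 1 for S₅ and S₆; and no single bit error produces a syndrome in which
exactly S₃ and S₄ have eigenvalue ≠ 1. -/
theorem simultaneous_bit_errors_q0_q6 :
    (∀ a b : Fin 2, ∀ i : Fin 3,
      ∃ l3 l4 : ℂ, l3 ≠ 1 ∧ l4 ≠ 1 ∧
        S3 (applyAt (XP a) 0 (applyAt (XP b) 6 (cw i))) =
          l3 • applyAt (XP a) 0 (applyAt (XP b) 6 (cw i)) ∧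
        S4 (applyAt (XP a) 0 (applyAt (XP b) 6 (cw i))) =
          l4 • applyAt (XP a) 0 (applyAt (XP b) 6 (cw i)) ∧
        S5 (applyAt (XP a) 0 (applyAt (XP b) 6 (cw i))) =
          applyAt (XP a) 0 (applyAt (XP b) 6 (cw i)) ∧
        S6 (applyAt (XP a) 0 (applyAt (XP b) 6 (cw i))) =
          applyAt (XP a) 0 (applyAt (XP b) 6 (cw i))) ∧
    ¬ ∃ (c : Fin 2) (j : Fin 7) (l3 l4 : ℂ), l3 ≠ 1 ∧ l4 ≠ 1 ∧
        ∀ i : Fin 3,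
          S3 (applyAt (XP c) j (cw i)) = l3 • applyAt (XP c) j (cw i) ∧
          S4 (applyAt (XP c) j (cw i)) = l4 • applyAt (XP c) j (cw i) ∧
          S5 (applyAt (XP c) j (cw i)) = applyAt (XP c) j (cw i) ∧
          S6 (applyAt (XP c) j (cw i)) = applyAt (XP c) j (cw i) := by
  constructor
  · intro a b i
    have hsyn (k : Fin 4) := stabilizer_shiftOp_cw k (Pi.single 0 a.succ + Pi.single 6 b.succ) i
    rw [syndrome_single_zero_add_single_six] at hsyn
    simp only [applyAt_XP, shiftOp_shiftOp]
    refine ⟨omegaChar a.succ, omegaChar (-b.succ), ?_, ?_, hsyn 0, hsyn 1,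
      (hsyn 2).trans ?_, (hsyn 3).trans ?_⟩
    · exact omegaChar_eq_one_iff.not.mpr a.succ_ne_zero
    · exact omegaChar_eq_one_iff.not.mpr (neg_ne_zero.mpr b.succ_ne_zero)
    all_goals simp
  · rintro ⟨c, j, l3, l4, hl3, hl4, h⟩
    obtain ⟨hS3, hS4, hS5, -⟩ := h 0
    rw [applyAt_XP] at hS3 hS4 hS5
    exact stabilizer_two_single_error_ne hl3 hl4 hS3 hS4 hS5
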